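/- The set P(ℝ^d) of probability measures is closed in the dual space (C²_∞(ℝ^d))* equipped with its norm: if μ_n ∈ P(ℝ^d) and μ_n → ℓ in the norm of (C²_∞(ℝ^d))*, then ℓ is given by integration against a probability measure μ ∈ P(ℝ^d). -/

import Mathlib

open MeasureTheory

/-- A function of class `C²_∞(ℝ^d)`: twice continuously differentiable with all
derivatives up to order 2 vanishing at infinity. -/
def IsC2Vanishing {d : ℕ} (f : EuclideanSpace ℝ (Fin d) → ℝ) : Prop :=
  ContDiff ℝ 2 f ∧
  Filter.Tendsto f (Filter.cocompact (EuclideanSpace ℝ (Fin d))) (nhds 0) ∧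
  Filter.Tendsto (fun y => fderiv ℝ f y)
    (Filter.cocompact (EuclideanSpace ℝ (Fin d))) (nhds 0) ∧
  Filter.Tendsto (fun y => fderiv ℝ (fderiv ℝ f) y)
    (Filter.cocompact (EuclideanSpace ℝ (Fin d))) (nhds 0)

/-- `‖f‖_{C²} = Σ_{l≤2} ‖f^{(l)}‖_∞ ≤ 1`. -/
def C2NormLeOne {d : ℕ} (f : EuclideanSpace ℝ (Fin d) → ℝ) : Prop :=
  ∃ C0 C1 C2 : ℝ, (∀ y, |f y| ≤ C0) ∧ (∀ y, ‖fderiv ℝ f y‖ ≤ C1) ∧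
    (∀ y, ‖fderiv ℝ (fderiv ℝ f) y‖ ≤ C2) ∧ C0 + C1 + C2 ≤ 1

/-!
Norm convergence in the dual of `C^k_∞` is uniform convergence of the integrals on the unit ball.
Dilates of one bump function are cutoffs equal to `1` on arbitrarily large balls, all in a fixed
multiple of the unit ball. Hence the mass that `μ_n` puts far away is controlled, uniformly in
large `n`, by the corresponding mass of a single `μ_N`, so no mass escapes to infinity and
`(μ_n)` is tight. By Prokhorov's theorem a subsequence converges weakly to a probability measure,
and integration against it must agree with the norm limit `ℓ`.
-/

open Filter Metric Set Topology
open scoped BoundedContinuousFunction ZeroAtInfty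

theorem exists_norm_le_of_tendsto_cocompact {X F : Type*} [TopologicalSpace X]
    [NormedAddCommGroup F] {g : X → F} (hg : Continuous g) (hg₀ : Tendsto g (cocompact X) (𝓝 0)) :
    ∃ C, ∀ x, ‖g x‖ ≤ C := by
  simpa using (⟨⟨g, hg⟩, hg₀⟩ : C₀(X, F)).isBounded_range.exists_norm_le

section CkFunctions

variable {E F : Type*} [NormedAddCommGroup E] [NormedSpace ℝ E]
  [NormedAddCommGroup F] [NormedSpace ℝ F] {k : ℕ} {c : ℝ} {f : E → F}

/-- Membership in `C^k_∞(E, F)`: the function is of class `C^k` and its derivatives of order at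
most `k` vanish at infinity. -/
structure IsCkVanishing (k : ℕ) (f : E → F) : Prop where
  contDiff : ContDiff ℝ k f
  tendsto_iteratedFDeriv : ∀ l ≤ k, Tendsto (iteratedFDeriv ℝ l f) (cocompact E) (𝓝 0)

/-- The bound `Σ_{l ≤ k} ‖f^{(l)}‖_∞ ≤ c` on the `C^k` norm. The sup norms are replaced by upper
bounds `C l`, so that no supremum of an unbounded set is taken. -/
def CkNormLE (k : ℕ) (c : ℝ) (f : E → F) : Prop :=
  ∃ C : ℕ → ℝ, (∀ l ≤ k, ∀ x, ‖iteratedFDeriv ℝ l f x‖ ≤ C l) ∧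
    ∑ l ∈ Finset.range (k + 1), C l ≤ c

/-- The closed ball of radius `c` around the origin of `C^k_∞(E, F)`. Convergence in the norm of
the dual space is uniform convergence on the ball of radius `1`. -/
def ckClosedBall (k : ℕ) (c : ℝ) : Set (E → F) :=
  {f | IsCkVanishing k f ∧ CkNormLE k c f}

theorem IsCkVanishing.of_hasCompactSupport (hf : ContDiff ℝ k f) (hs : HasCompactSupport f) :
    IsCkVanishing k f :=
  ⟨hf, fun l _ ↦ (hs.iteratedFDeriv l).is_zero_at_infty⟩

theorem IsCkVanishing.const_smul (hf : IsCkVanishing k f) (a : ℝ) : IsCkVanishing k (a • f) where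
  contDiff := hf.contDiff.const_smul a
  tendsto_iteratedFDeriv l hl := by
    have hderiv : iteratedFDeriv ℝ l (a • f) = fun x ↦ a • iteratedFDeriv ℝ l f x := funext fun _ ↦
      iteratedFDeriv_const_smul_apply (hf.contDiff.of_le (mod_cast hl)).contDiffAt
    simpa only [hderiv, smul_zero] using (hf.tendsto_iteratedFDeriv l hl).const_smul a

theorem IsCkVanishing.exists_ckNormLE (hf : IsCkVanishing k f) : ∃ c > 0, CkNormLE k c f := by
  have hbound : ∀ l, ∃ C, l ≤ k → ∀ x, ‖iteratedFDeriv ℝ l f x‖ ≤ C := fun l ↦ by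
    by_cases hl : l ≤ k
    · obtain ⟨C, hC⟩ := exists_norm_le_of_tendsto_cocompact
        (hf.contDiff.continuous_iteratedFDeriv (mod_cast hl)) (hf.tendsto_iteratedFDeriv l hl)
      exact ⟨C, fun _ ↦ hC⟩
    · exact ⟨0, fun h ↦ absurd h hl⟩
  choose C hC using hbound
  exact ⟨max 1 (∑ l ∈ Finset.range (k + 1), C l), lt_max_of_lt_left one_pos, C, hC,
    le_max_right _ _⟩

theorem CkNormLE.exists_norm_le (h : CkNormLE k c f) : ∃ C, ∀ x, ‖f x‖ ≤ C := by
  obtain ⟨C, hC, -⟩ := h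
  exact ⟨C 0, by simpa only [norm_iteratedFDeriv_zero] using hC 0 (Nat.zero_le k)⟩

theorem CkNormLE.const_smul (hf : ContDiff ℝ k f) (h : CkNormLE k c f) (a : ℝ) :
    CkNormLE k (|a| * c) (a • f) := by
  obtain ⟨C, hC, hsum⟩ := h
  refine ⟨fun l ↦ |a| * C l, fun l hl x ↦ ?_, ?_⟩
  · rw [iteratedFDeriv_const_smul_apply (hf.of_le (mod_cast hl)).contDiffAt, norm_smul,
      Real.norm_eq_abs]
    exact mul_le_mul_of_nonneg_left (hC l hl x) (abs_nonneg a)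
  · rw [← Finset.mul_sum]
    exact mul_le_mul_of_nonneg_left hsum (abs_nonneg a)

theorem CkNormLE.comp_const_smul (hf : ContDiff ℝ k f) (h : CkNormLE k c f) {a : ℝ}
    (ha : |a| ≤ 1) : CkNormLE k c (fun x ↦ f (a • x)) := by
  obtain ⟨C, hC, hsum⟩ := h
  refine ⟨C, fun l hl x ↦ ?_, hsum⟩
  rw [iteratedFDeriv_comp_const_smul a (hf.of_le (mod_cast hl)), norm_smul, norm_pow,
    Real.norm_eq_abs]
  calc |a| ^ l * ‖iteratedFDeriv ℝ l f (a • x)‖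
      ≤ 1 * ‖iteratedFDeriv ℝ l f (a • x)‖ := by gcongr; exact pow_le_one₀ (abs_nonneg a) ha
    _ ≤ C l := by rw [one_mul]; exact hC l hl _

theorem inv_smul_mem_ckClosedBall_one (hc : 0 < c) (hf : f ∈ ckClosedBall k c) :
    c⁻¹ • f ∈ ckClosedBall k 1 := by
  refine ⟨hf.1.const_smul c⁻¹, ?_⟩
  simpa [abs_of_pos hc, hc.ne'] using hf.2.const_smul hf.1.contDiff c⁻¹

-- Dilating a bump function by `R ≥ 1` multiplies its `l`-th derivative by `R⁻ˡ ≤ 1`.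
theorem exists_cutoff_mem_ckClosedBall (E : Type*) [NormedAddCommGroup E] [NormedSpace ℝ E]
    [FiniteDimensional ℝ E] (k : ℕ) :
    ∃ c > 0, ∀ R ≥ 1, ∃ h ∈ ckClosedBall (E := E) (F := ℝ) k c,
      (closedBall 0 R).indicator 1 ≤ h ∧ h ≤ (closedBall 0 (2 * R)).indicator 1 := by
  let ψ : ContDiffBump (0 : E) := ⟨1, 2, one_pos, one_lt_two⟩
  obtain ⟨c, hc, hψc⟩ := (IsCkVanishing.of_hasCompactSupport (k := k) ψ.contDiff
    ψ.hasCompactSupport).exists_ckNormLE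
  refine ⟨c, hc, fun R hR ↦ ?_⟩
  have hR₀ : 0 < R := one_pos.trans_le hR
  have hnorm (x : E) : ‖R⁻¹ • x‖ = ‖x‖ / R := by
    rw [norm_smul, norm_inv, Real.norm_of_nonneg hR₀.le, inv_mul_eq_div]
  have hone : ∀ x ∈ closedBall (0 : E) R, ψ (R⁻¹ • x) = 1 := fun x hx ↦ by
    refine ψ.one_of_mem_closedBall (mem_closedBall_zero_iff.2 ?_)
    rw [hnorm]
    exact (div_le_one hR₀).2 (mem_closedBall_zero_iff.1 hx)
  have hzero : ∀ x ∉ closedBall (0 : E) (2 * R), ψ (R⁻¹ • x) = 0 := fun x hx ↦ by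
    refine ψ.zero_of_le_dist ?_
    rw [dist_zero_right, hnorm]
    exact (le_div_iff₀ hR₀).2 (not_le.1 (mt mem_closedBall_zero_iff.2 hx)).le
  refine ⟨fun x ↦ ψ (R⁻¹ • x), ⟨?_, ?_⟩, ?_, ?_⟩
  · exact .of_hasCompactSupport (ψ.contDiff.comp (contDiff_const_smul _))
      (.intro (isCompact_closedBall 0 (2 * R)) hzero)
  · refine hψc.comp_const_smul ψ.contDiff ?_
    rw [abs_of_pos (inv_pos.2 hR₀)]
    exact inv_le_one_of_one_le₀ hR
  · exact indicator_le' (fun x hx ↦ (hone x hx).ge) fun _ _ ↦ ψ.nonneg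
  · exact le_indicator (fun _ _ ↦ ψ.le_one) fun x hx ↦ (hzero x hx).le

end CkFunctions

section Tightness

theorem measureReal_compl_le_add_abs_integral_sub {X : Type*} [MeasurableSpace X]
    {μ ν : Measure X} [IsProbabilityMeasure μ] [IsProbabilityMeasure ν] {A B : Set X} {h : X → ℝ}
    (hA : MeasurableSet A) (hB : MeasurableSet B) (hh : Measurable h)
    (hAh : A.indicator 1 ≤ h) (hhB : h ≤ B.indicator 1) :
    μ.real Bᶜ ≤ ν.real Aᶜ + |∫ x, h x ∂μ - ∫ x, h x ∂ν| := by
  have hbound (x : X) : ‖h x‖ ≤ 1 := by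
    rw [Real.norm_of_nonneg ((indicator_nonneg (fun _ _ ↦ zero_le_one) x).trans (hAh x))]
    exact (hhB x).trans (indicator_le_self' (fun _ _ ↦ zero_le_one) x)
  have hint (ρ : Measure X) [IsProbabilityMeasure ρ] : Integrable h ρ :=
    .of_bound hh.aestronglyMeasurable 1 (.of_forall hbound)
  have hlower : ν.real A ≤ ∫ x, h x ∂ν := by
    rw [← integral_indicator_one hA]
    exact integral_mono ((integrable_const 1).indicator hA) (hint ν) hAh
  have hupper : ∫ x, h x ∂μ ≤ μ.real B := by
    rw [← integral_indicator_one hB]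
    exact integral_mono (hint μ) ((integrable_const 1).indicator hB) hhB
  rw [probReal_compl_eq_one_sub hA, probReal_compl_eq_one_sub hB]
  linarith [neg_abs_le (∫ x, h x ∂μ - ∫ x, h x ∂ν)]

theorem isTightMeasureSet_range_of_eventually_measureReal_compl_le {X : Type*} [MeasurableSpace X]
    [TopologicalSpace X] [TopologicalSpace.IsCompletelyPseudoMetrizableSpace X]
    [SecondCountableTopology X] [BorelSpace X] {μ : ℕ → Measure X} [∀ n, IsFiniteMeasure (μ n)]
    (h : ∀ ε > (0 : ℝ), ∃ K, IsCompact K ∧ ∀ᶠ n in atTop, (μ n).real Kᶜ ≤ ε) :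
    IsTightMeasureSet (range μ) := by
  rw [isTightMeasureSet_iff_exists_isCompact_measure_compl_le]
  intro ε hε
  obtain ⟨δ, hδ, hδε⟩ := ENNReal.lt_iff_exists_nnreal_btwn.1 hε
  obtain ⟨K, hK, hKδ⟩ := h δ (mod_cast hδ)
  obtain ⟨N, hN⟩ := eventually_atTop.1 hKδ
  have hsingle (n : ℕ) : ∃ L, IsCompact L ∧ μ n Lᶜ ≤ ε := by
    simpa using isTightMeasureSet_iff_exists_isCompact_measure_compl_le.1
      (isTightMeasureSet_singleton (μ := μ n)) ε hε
  choose L hL hLε using hsingle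
  refine ⟨K ∪ ⋃ n ∈ Iio N, L n, hK.union ((finite_Iio N).isCompact_biUnion fun n _ ↦ hL n), ?_⟩
  rintro _ ⟨n, rfl⟩
  obtain hn | hn := lt_or_ge n N
  · refine (measure_mono (compl_subset_compl.2 ?_)).trans (hLε n)
    exact (subset_biUnion_of_mem (u := L) (mem_Iio.2 hn)).trans subset_union_right
  · calc μ n (K ∪ ⋃ n ∈ Iio N, L n)ᶜ
        ≤ μ n Kᶜ := measure_mono (compl_subset_compl.2 subset_union_left)
      _ ≤ δ := by
        rw [← ofReal_measureReal, ← ENNReal.ofReal_coe_nnreal]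
        exact ENNReal.ofReal_le_ofReal (hN n hn)
      _ ≤ ε := hδε.le

theorem exists_closedBall_measureReal_compl_le {X : Type*} [PseudoMetricSpace X]
    [CompleteSpace X] [SecondCountableTopology X] [MeasurableSpace X] [BorelSpace X]
    (μ : Measure X) [IsFiniteMeasure μ] (x : X) {ε : ℝ} (hε : 0 < ε) :
    ∃ R ≥ 1, μ.real (closedBall x R)ᶜ ≤ ε := by
  have htail := tendsto_measure_compl_closedBall_of_isTightMeasureSet
    (isTightMeasureSet_singleton (μ := μ)) x
  simp only [mem_singleton_iff, iSup_iSup_eq_left] at htail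
  obtain ⟨R, hR, hRε⟩ := ((eventually_ge_atTop 1).and
    (htail.eventually_le_const (ENNReal.ofReal_pos.2 hε))).exists
  exact ⟨R, hR, ENNReal.toReal_le_of_le_ofReal hε.le hRε⟩

theorem exists_subseq_tendsto_integral_of_isTightMeasureSet {X : Type*} [TopologicalSpace X]
    [PolishSpace X] [MeasurableSpace X] [BorelSpace X] {μ : ℕ → Measure X}
    [∀ n, IsProbabilityMeasure (μ n)] (hμ : IsTightMeasureSet (range μ)) :
    ∃ ν : Measure X, IsProbabilityMeasure ν ∧ ∃ φ : ℕ → ℕ, StrictMono φ ∧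
      ∀ g : X →ᵇ ℝ, Tendsto (fun n ↦ ∫ x, g x ∂μ (φ n)) atTop (𝓝 (∫ x, g x ∂ν)) := by
  let p (n : ℕ) : ProbabilityMeasure X := ⟨μ n, inferInstance⟩
  have hcompact : IsCompact (closure (range p)) := by
    refine isCompact_closure_of_isTightMeasureSet (hμ.subset ?_)
    rintro _ ⟨_, ⟨n, rfl⟩, rfl⟩
    exact ⟨n, rfl⟩
  obtain ⟨ν, -, φ, hφ, hν⟩ := hcompact.tendsto_subseq fun n ↦ subset_closure (mem_range_self n)
  exact ⟨ν, inferInstance, φ, hφ,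
    ProbabilityMeasure.tendsto_iff_forall_integral_tendsto.1 hν⟩

end Tightness

section DualConvergence

variable {E : Type*} [NormedAddCommGroup E] [NormedSpace ℝ E] [MeasurableSpace E] {k : ℕ}
  {μ : ℕ → Measure E}

theorem uniformCauchySeqOn_integral_ckClosedBall
    (hμ : UniformCauchySeqOn (fun n (f : E → ℝ) ↦ ∫ x, f x ∂μ n) atTop (ckClosedBall k 1))
    {c : ℝ} (hc : 0 < c) :
    UniformCauchySeqOn (fun n (f : E → ℝ) ↦ ∫ x, f x ∂μ n) atTop (ckClosedBall k c) := by
  rw [Metric.uniformCauchySeqOn_iff] at hμ ⊢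
  intro ε hε
  obtain ⟨N, hN⟩ := hμ (c⁻¹ * ε) (by positivity)
  refine ⟨N, fun m hm n hn f hf ↦ ?_⟩
  have hscaled := hN m hm n hn _ (inv_smul_mem_ckClosedBall_one hc hf)
  simp only [Pi.smul_apply, integral_smul, dist_smul₀, norm_inv, Real.norm_of_nonneg hc.le]
    at hscaled
  exact lt_of_mul_lt_mul_left hscaled (inv_pos.2 hc).le

theorem isTightMeasureSet_range_of_uniformCauchySeqOn [FiniteDimensional ℝ E] [BorelSpace E]
    [∀ n, IsProbabilityMeasure (μ n)]
    (hμ : UniformCauchySeqOn (fun n (f : E → ℝ) ↦ ∫ x, f x ∂μ n) atTop (ckClosedBall k 1)) :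
    IsTightMeasureSet (range μ) := by
  have : ProperSpace E := FiniteDimensional.proper_real E
  refine isTightMeasureSet_range_of_eventually_measureReal_compl_le fun ε hε ↦ ?_
  obtain ⟨c, hc, hcutoff⟩ := exists_cutoff_mem_ckClosedBall E k
  obtain ⟨N, hN⟩ := Metric.uniformCauchySeqOn_iff.1
    (uniformCauchySeqOn_integral_ckClosedBall hμ hc) (ε / 2) (half_pos hε)
  obtain ⟨R, hR, htail⟩ := exists_closedBall_measureReal_compl_le (μ N) 0 (half_pos hε)
  obtain ⟨h, hh, hlower, hupper⟩ := hcutoff R hR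
  refine ⟨closedBall 0 (2 * R), isCompact_closedBall _ _, eventually_atTop.2 ⟨N, fun n hn ↦ ?_⟩⟩
  calc (μ n).real (closedBall 0 (2 * R))ᶜ
      ≤ (μ N).real (closedBall 0 R)ᶜ + |∫ x, h x ∂μ n - ∫ x, h x ∂μ N| :=
        measureReal_compl_le_add_abs_integral_sub measurableSet_closedBall
          measurableSet_closedBall hh.1.contDiff.continuous.measurable hlower hupper
    _ ≤ ε / 2 + ε / 2 := add_le_add htail (hN n hn N le_rfl h hh).le
    _ = ε := add_halves ε

theorem tendsto_integral_of_tendstoUniformlyOn_ckClosedBall {ℓ : (E → ℝ) → ℝ}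
    (hsmul : ∀ (a : ℝ) f, IsCkVanishing k f → ℓ (a • f) = a * ℓ f)
    (hμ : TendstoUniformlyOn (fun n f ↦ ∫ x, f x ∂μ n) ℓ atTop (ckClosedBall k 1))
    {f : E → ℝ} (hf : IsCkVanishing k f) :
    Tendsto (fun n ↦ ∫ x, f x ∂μ n) atTop (𝓝 (ℓ f)) := by
  obtain ⟨c, hc, hfc⟩ := hf.exists_ckNormLE
  have hscaled := hμ.tendsto_at (inv_smul_mem_ckClosedBall_one hc ⟨hf, hfc⟩)
  simp only [Pi.smul_apply, integral_smul, hsmul _ f hf] at hscaled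
  simpa [hc.ne'] using hscaled.const_mul c

theorem prob_measures_closed_in_C2inf_dual_general [FiniteDimensional ℝ E] [BorelSpace E]
    [∀ n, IsProbabilityMeasure (μ n)] {ℓ : (E → ℝ) → ℝ}
    (hsmul : ∀ (a : ℝ) f, IsCkVanishing k f → ℓ (a • f) = a * ℓ f)
    (hμ : TendstoUniformlyOn (fun n f ↦ ∫ x, f x ∂μ n) ℓ atTop (ckClosedBall k 1)) :
    ∃ ν : Measure E, IsProbabilityMeasure ν ∧
      ∀ f : E → ℝ, IsCkVanishing k f → ℓ f = ∫ x, f x ∂ν := by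
  have : ProperSpace E := FiniteDimensional.proper_real E
  have htight := isTightMeasureSet_range_of_uniformCauchySeqOn hμ.uniformCauchySeqOn
  obtain ⟨ν, hν, φ, hφ, hweak⟩ := exists_subseq_tendsto_integral_of_isTightMeasureSet htight
  refine ⟨ν, hν, fun f hf ↦ ?_⟩
  obtain ⟨_, -, hfc⟩ := hf.exists_ckNormLE
  obtain ⟨C, hC⟩ := hfc.exists_norm_le
  exact tendsto_nhds_unique
    ((tendsto_integral_of_tendstoUniformlyOn_ckClosedBall hsmul hμ hf).comp hφ.tendsto_atTop)
    (hweak (.ofNormedAddCommGroup f hf.contDiff.continuous C hC))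

end DualConvergence

section EuclideanSpace

theorem norm_iteratedFDeriv_two {E F : Type*} [NormedAddCommGroup E] [NormedSpace ℝ E]
    [NormedAddCommGroup F] [NormedSpace ℝ F] (g : E → F) (x : E) :
    ‖iteratedFDeriv ℝ 2 g x‖ = ‖fderiv ℝ (fderiv ℝ g) x‖ := by
  rw [← norm_iteratedFDeriv_fderiv, norm_iteratedFDeriv_one]

variable {d : ℕ} {f : EuclideanSpace ℝ (Fin d) → ℝ}

theorem isCkVanishing_two_iff : IsCkVanishing 2 f ↔ IsC2Vanishing f := by
  have h₀ : Tendsto (iteratedFDeriv ℝ 0 f) (cocompact _) (𝓝 0) ↔ Tendsto f (cocompact _) (𝓝 0) := by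
    rw [tendsto_zero_iff_norm_tendsto_zero, tendsto_zero_iff_norm_tendsto_zero (f := f)]
    simp only [norm_iteratedFDeriv_zero]
  have h₁ : Tendsto (iteratedFDeriv ℝ 1 f) (cocompact _) (𝓝 0) ↔
      Tendsto (fderiv ℝ f) (cocompact _) (𝓝 0) := by
    rw [tendsto_zero_iff_norm_tendsto_zero, tendsto_zero_iff_norm_tendsto_zero (f := fderiv ℝ f)]
    simp only [norm_iteratedFDeriv_one]
  have h₂ : Tendsto (iteratedFDeriv ℝ 2 f) (cocompact _) (𝓝 0) ↔
      Tendsto (fderiv ℝ (fderiv ℝ f)) (cocompact _) (𝓝 0) := by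
    rw [tendsto_zero_iff_norm_tendsto_zero,
      tendsto_zero_iff_norm_tendsto_zero (f := fderiv ℝ (fderiv ℝ f))]
    simp only [norm_iteratedFDeriv_two]
  constructor
  · rintro ⟨hf, hlim⟩
    exact ⟨hf, h₀.1 (hlim 0 (by simp)), h₁.1 (hlim 1 (by simp)), h₂.1 (hlim 2 le_rfl)⟩
  · rintro ⟨hf, hlim₀, hlim₁, hlim₂⟩
    refine ⟨hf, fun l hl ↦ ?_⟩
    interval_cases l
    exacts [h₀.2 hlim₀, h₁.2 hlim₁, h₂.2 hlim₂]

theorem ckNormLE_two_one_iff : CkNormLE 2 1 f ↔ C2NormLeOne f := by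
  constructor
  · rintro ⟨C, hC, hsum⟩
    refine ⟨C 0, C 1, C 2, ?_, ?_, ?_, by simpa [Finset.sum_range_succ] using hsum⟩
    · simpa using hC 0 (by simp)
    · simpa using hC 1 (by simp)
    · simpa only [norm_iteratedFDeriv_two] using hC 2 le_rfl
  · rintro ⟨C₀, C₁, C₂, h₀, h₁, h₂, hsum⟩
    refine ⟨fun | 0 => C₀ | 1 => C₁ | _ => C₂, fun l hl ↦ ?_, ?_⟩
    · interval_cases l
      · simpa using h₀
      · simpa using h₁
      · simpa [norm_iteratedFDeriv_two] using h₂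
    · simpa [Finset.sum_range_succ] using hsum

theorem tendstoUniformlyOn_ckClosedBall_two_one
    {L : ℕ → (EuclideanSpace ℝ (Fin d) → ℝ) → ℝ} {ℓ : (EuclideanSpace ℝ (Fin d) → ℝ) → ℝ}
    (hL : ∀ ε > (0 : ℝ), ∃ N : ℕ, ∀ n ≥ N, ∀ f, IsC2Vanishing f → C2NormLeOne f →
      |L n f - ℓ f| ≤ ε) :
    TendstoUniformlyOn L ℓ atTop (ckClosedBall 2 1) := by
  rw [Metric.tendstoUniformlyOn_iff]
  intro ε hε
  obtain ⟨N, hN⟩ := hL (ε / 2) (half_pos hε)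
  filter_upwards [eventually_ge_atTop N] with n hn f hf
  rw [dist_comm]
  exact (hN n hn f (isCkVanishing_two_iff.1 hf.1) (ckNormLE_two_one_iff.1 hf.2)).trans_lt
    (half_lt_self hε)

end EuclideanSpace

/-- the set of probability measures on `ℝ^d` is closed in the
norm of the dual space `(C²_∞(ℝ^d))*`: if probability measures `μ_n` converge
in this dual norm to a linear functional `ℓ`, then `ℓ` is given by integration
against some probability measure. -/
theorem prob_measures_closed_in_C2inf_dual {d : ℕ}
    (μn : ℕ → Measure (EuclideanSpace ℝ (Fin d)))
    [∀ n, IsProbabilityMeasure (μn n)]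
    (ℓ : (EuclideanSpace ℝ (Fin d) → ℝ) → ℝ)
    (hadd : ∀ f g, IsC2Vanishing f → IsC2Vanishing g → ℓ (f + g) = ℓ f + ℓ g)
    (hsmul : ∀ (a : ℝ) f, IsC2Vanishing f → ℓ (a • f) = a * ℓ f)
    (hconv : ∀ ε > (0 : ℝ), ∃ N : ℕ, ∀ n ≥ N,
      ∀ f : EuclideanSpace ℝ (Fin d) → ℝ, IsC2Vanishing f → C2NormLeOne f →
        |(∫ y, f y ∂(μn n)) - ℓ f| ≤ ε) :
    ∃ μ : Measure (EuclideanSpace ℝ (Fin d)), IsProbabilityMeasure μ ∧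
      ∀ f : EuclideanSpace ℝ (Fin d) → ℝ, IsC2Vanishing f →
        ℓ f = ∫ y, f y ∂μ := by
  simp only [← isCkVanishing_two_iff] at hsmul ⊢
  exact prob_measures_closed_in_C2inf_dual_general hsmul
    (tendstoUniformlyOn_ckClosedBall_two_one hconv)
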